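/- Let d ≥ 1 and let μ, ν be Borel probability measures on ℝ^d with finite second moments. Then μ and ν are in convex order (μ ≼_c ν) if and only if for every Borel probability measure ρ on ℝ^d with bounded support one has W₂(ν,ρ)² − W₂(μ,ρ)² ≤ ∫|y|² dν(y) − ∫|x|² dμ(x). -/

import Mathlib

/-!
Expanding the square, `W₂(α, ρ)² = ∫ |x|² dα + ∫ |z|² dρ - 2 C(α, ρ)` where `C(α, ρ)` is the maximal
covariance `sup_π ∫ ⟪x, z⟫ dπ`, so the inequality in the theorem says `C(μ, ρ) ≤ C(ν, ρ)`.

If this holds for all `ρ`, let `F x = max_i (⟪x, a i⟫ + b i)` be a finite maximum of affine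
functions, attained at the index `J x`, and let `ρ` be the law of `a ∘ J` under `μ`. The coupling
`(x, a (J x))` shows that `∫ F dμ ≤ C(μ, ρ) + ∫ B dρ` with `B (a (J x)) = b (J x)`, while
`⟪x, z⟫ + B z ≤ F x` gives `C(ν, ρ) + ∫ B dρ ≤ ∫ F dν`; hence `∫ F dμ ≤ ∫ F dν`. Every convex
function is the increasing limit of such `F`.

Conversely let `μ ≼_c ν`, let `π` be a coupling of `μ` and `ρ`, and round `z` to a point `a (T z)`
of a finite set. For an affine image of `Y ~ μ` that depends on an index `J ∈ ι`, every continuous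
linear functional `f` satisfies `f (E [L_J Y + v_J]) ≤ ∫ max_i f (L_i y + v_i) dν`, by the convex
order. By Hahn-Banach, this mean is then in the closure of the Aumann integral of
`y ↦ conv {L_i y + v_i}` against `ν`. Applied to `(𝟙_i, ⟪y, a i⟫)`, this gives weights `w y` on
`ι` which distribute the mass of `ν` with the masses `ρ(T = i)` and make the covariance with `a`
almost as large as under `π`. Gluing the weighted pieces of `ν` to the conditional laws of `ρ` on
the fibers of `T` yields a coupling of `ν` and `ρ`, and letting the rounding error tend to `0`
gives `C(μ, ρ) ≤ C(ν, ρ)`.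
-/

open MeasureTheory Metric

noncomputable section

/-- The set of couplings of two measures on `ℝ^d`. -/
def Couplings {d : ℕ} (α β : Measure (EuclideanSpace ℝ (Fin d))) :
    Set (Measure (EuclideanSpace ℝ (Fin d) × EuclideanSpace ℝ (Fin d))) :=
  {π | π.map Prod.fst = α ∧ π.map Prod.snd = β}

/-- The squared 2-Wasserstein distance `W₂(α,β)² = inf_{π ∈ Π(α,β)} ∫ |x-y|² dπ`. -/
def W2sq {d : ℕ} (α β : Measure (EuclideanSpace ℝ (Fin d))) : ℝ :=
  sInf {r : ℝ | ∃ π ∈ Couplings α β, r = ∫ p, ‖p.1 - p.2‖ ^ 2 ∂π}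

/-- Convex order: `∫ f dμ ≤ ∫ f dν` for all convex `f` integrable w.r.t. both. -/
def ConvexOrder {d : ℕ} (μ ν : Measure (EuclideanSpace ℝ (Fin d))) : Prop :=
  ∀ f : EuclideanSpace ℝ (Fin d) → ℝ, ConvexOn ℝ Set.univ f →
    Integrable f μ → Integrable f ν → ∫ x, f x ∂μ ≤ ∫ x, f x ∂ν

section Selection

open Set

variable {Ω ι V : Type*} [MeasurableSpace Ω] [Fintype ι]
  [NormedAddCommGroup V] [NormedSpace ℝ V] {P : Measure Ω} {X : ι → Ω → V}

lemma exists_measurable_iSup_eq {ι : Type*} [Finite ι] [Nonempty ι] [MeasurableSpace ι]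
    {g : ι → Ω → ℝ} (hg : ∀ i, Measurable (g i)) :
    ∃ J : Ω → ι, Measurable J ∧ ∀ ω, ⨆ i, g i ω = g (J ω) ω := by
  classical
  obtain ⟨e, he⟩ := exists_surjective_nat ι
  have exists_max : ∀ ω, ∃ n, ⨆ i, g i ω = g (e n) ω := fun ω => by
    obtain ⟨i, hi⟩ := exists_eq_ciSup_of_finite (f := fun i => g i ω)
    obtain ⟨n, rfl⟩ := he i
    exact ⟨n, hi.symm⟩
  have measurableSet_max : ∀ n, MeasurableSet {ω | ⨆ i, g i ω = g (e n) ω} := fun n =>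
    measurableSet_eq_fun (.iSup hg) (hg (e n))
  exact ⟨fun ω => e (Nat.find (exists_max ω)),
    measurable_from_nat.comp (measurable_find exists_max measurableSet_max),
    fun ω => Nat.find_spec (exists_max ω)⟩

lemma integrable_smul_of_mem_stdSimplex {w : Ω → ι → ℝ} (hw : Measurable w)
    (hw_mem : ∀ ω, w ω ∈ stdSimplex ℝ ι) {Y : Ω → V} (hY : Integrable Y P) (i : ι) :
    Integrable (fun ω => w ω i • Y ω) P :=
  hY.bdd_smul 1 ((measurable_pi_apply i).comp hw).aestronglyMeasurable <| .of_forall fun ω => by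
    rw [Real.norm_of_nonneg ((hw_mem ω).1 i)]
    exact (mem_Icc_of_mem_stdSimplex (hw_mem ω) i).2

lemma integrable_apply_of_mem_stdSimplex [IsFiniteMeasure P] {w : Ω → ι → ℝ} (hw : Measurable w)
    (hw_mem : ∀ ω, w ω ∈ stdSimplex ℝ ι) (i : ι) : Integrable (fun ω => w ω i) P := by
  simpa using integrable_smul_of_mem_stdSimplex hw hw_mem (integrable_const (1 : ℝ)) i

lemma integrable_sum_smul_of_mem_stdSimplex {w : Ω → ι → ℝ} (hw : Measurable w)
    (hw_mem : ∀ ω, w ω ∈ stdSimplex ℝ ι) (hX : ∀ i, Integrable (X i) P) :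
    Integrable (fun ω => ∑ i, w ω i • X i ω) P :=
  integrable_finsetSum _ fun i _ => integrable_smul_of_mem_stdSimplex hw hw_mem (hX i) i

/-- The Aumann integral `∫ conv {X i ω | i} dP(ω)` of the polytope spanned by finitely many vector
fields: the set of the integrals of its measurable selections, each of which is encoded by its
barycentric coordinates `w`. -/
def aumannIntegral (P : Measure Ω) (X : ι → Ω → V) : Set V :=
  {v | ∃ w : Ω → ι → ℝ, Measurable w ∧ (∀ ω, w ω ∈ stdSimplex ℝ ι) ∧
    v = ∫ ω, ∑ i, w ω i • X i ω ∂P}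

lemma convex_aumannIntegral (hX : ∀ i, Integrable (X i) P) : Convex ℝ (aumannIntegral P X) := by
  rintro _ ⟨w, hw, hw_mem, rfl⟩ _ ⟨w', hw', hw'_mem, rfl⟩ s t hs ht hst
  refine ⟨fun ω => s • w ω + t • w' ω, (hw.const_smul s).add (hw'.const_smul t),
    fun ω => convex_stdSimplex ℝ ι (hw_mem ω) (hw'_mem ω) hs ht hst, ?_⟩
  rw [← integral_smul, ← integral_smul, ← integral_add
    ((integrable_sum_smul_of_mem_stdSimplex hw hw_mem hX).fun_smul s)
    ((integrable_sum_smul_of_mem_stdSimplex hw' hw'_mem hX).fun_smul t)]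
  simp only [Pi.add_apply, Pi.smul_apply, smul_eq_mul, add_smul, mul_smul,
    Finset.sum_add_distrib, Finset.smul_sum]

lemma integrable_selection {ι : Type*} [Finite ι] [MeasurableSpace ι] [DiscreteMeasurableSpace ι]
    {X : ι → Ω → V} {J : Ω → ι} (hJ : Measurable J) (hX : ∀ i, Integrable (X i) P) :
    Integrable (fun ω => X (J ω) ω) P := by
  classical
  cases nonempty_fintype ι
  simpa [Pi.single_apply, ite_smul] using integrable_sum_smul_of_mem_stdSimplex
    ((Measurable.of_discrete (f := fun i : ι => (Pi.single i 1 : ι → ℝ))).comp hJ)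
    (fun ω => single_mem_stdSimplex ℝ (J ω)) hX

lemma integral_selection_mem_aumannIntegral [MeasurableSpace ι] [DiscreteMeasurableSpace ι]
    {J : Ω → ι} (hJ : Measurable J) :
    ∫ ω, X (J ω) ω ∂P ∈ aumannIntegral P X := by
  classical
  refine ⟨fun ω => Pi.single (J ω) 1,
    (Measurable.of_discrete (f := fun i : ι => (Pi.single i 1 : ι → ℝ))).comp hJ,
    fun ω => single_mem_stdSimplex ℝ (J ω), ?_⟩
  simp [Pi.single_apply, ite_smul]

lemma integrable_iSup {ι : Type*} [Finite ι] [Nonempty ι] {g : ι → Ω → ℝ}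
    (hg : ∀ i, Measurable (g i)) (hg_int : ∀ i, Integrable (g i) P) :
    Integrable (fun ω => ⨆ i, g i ω) P := by
  cases nonempty_fintype ι
  let _ : MeasurableSpace ι := ⊤
  obtain ⟨J, hJ, iSup_eq⟩ := exists_measurable_iSup_eq hg
  simpa only [iSup_eq] using integrable_selection hJ hg_int

lemma mem_closure_aumannIntegral [Nonempty ι] [CompleteSpace V] {v : V}
    (hX : ∀ i, StronglyMeasurable (X i)) (hX_int : ∀ i, Integrable (X i) P)
    (hv : ∀ f : StrongDual ℝ V, f v ≤ ∫ ω, ⨆ i, f (X i ω) ∂P) :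
    v ∈ closure (aumannIntegral P X) := by
  let _ : MeasurableSpace ι := ⊤
  by_contra hnot
  obtain ⟨f, u, hfu, huv⟩ := geometric_hahn_banach_closed_point
    (convex_aumannIntegral hX_int).closure isClosed_closure hnot
  obtain ⟨J, hJ, iSup_eq⟩ := exists_measurable_iSup_eq (g := fun i ω => f (X i ω))
    fun i => (f.continuous.comp_stronglyMeasurable (hX i)).measurable
  have f_integral : f (∫ ω, X (J ω) ω ∂P) = ∫ ω, ⨆ i, f (X i ω) ∂P := by
    simp only [iSup_eq, f.integral_comp_comm (integrable_selection hJ hX_int)]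
  have := hfu _ (subset_closure (integral_selection_mem_aumannIntegral hJ))
  linarith [hv f]

end Selection

lemma exists_continuous_mul_apply_le {ι : Type*} [Finite ι] {p : ι → ℝ} (hp : ∀ i, 0 < p i) :
    ∃ s : (ι → ℝ) → ℝ, Continuous s ∧ s p = 1 ∧ (∀ q, 0 ≤ s q) ∧ ∀ q i, s q * q i ≤ p i := by
  cases nonempty_fintype ι
  have term_nonneg : ∀ (q : ι → ℝ) i, 0 ≤ |q i - p i| / p i := fun q i =>
    div_nonneg (abs_nonneg _) (hp i).le
  have denom_pos : ∀ q : ι → ℝ, 0 < 1 + ∑ i, |q i - p i| / p i := fun q =>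
    add_pos_of_pos_of_nonneg one_pos (Finset.sum_nonneg fun i _ => term_nonneg q i)
  refine ⟨fun q => (1 + ∑ i, |q i - p i| / p i)⁻¹,
    Continuous.inv₀ (by fun_prop) fun q => (denom_pos q).ne', by simp,
    fun q => (inv_pos.2 (denom_pos q)).le, fun q i => ?_⟩
  have single_le := Finset.single_le_sum (fun i _ => term_nonneg q i) (Finset.mem_univ i)
  rw [div_le_iff₀ (hp i)] at single_le
  rw [inv_mul_le_iff₀ (denom_pos q)]
  linarith [le_abs_self (q i - p i)]

lemma exists_lt_mem_of_mem_closure {ι : Type*} [Fintype ι] [DecidableEq ι]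
    {K : Set ((ι → ℝ) × ℝ)} (hK : Convex ℝ K) (hK_fst : ∀ k ∈ K, k.1 ∈ stdSimplex ℝ ι)
    {L : ι → ℝ} (hL : ∀ i, (Pi.single i 1, L i) ∈ K) {p : ι → ℝ} {m c : ℝ}
    (hpm : (p, m) ∈ closure K) (hp : ∀ i, 0 < p i) (hc : c < m) :
    ∃ r, c < r ∧ (p, r) ∈ K := by
  have hp_sum : ∑ i, p i = 1 :=
    (closure_minimal hK_fst ((isClosed_stdSimplex ℝ ι).preimage continuous_fst) hpm).2
  obtain ⟨s, hs, hsp, hs_nonneg, hs_le⟩ := exists_continuous_mul_apply_le hp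
  -- Shrink a point `k ∈ K` near `(p, m)` by `s k.1` and fill the first coordinate back up to `p`
  -- with the points `(Pi.single i 1, L i)` of `K`; the result has second coordinate `G k`.
  let G : (ι → ℝ) × ℝ → ℝ := fun k => s k.1 * k.2 + ∑ i, (p i - s k.1 * k.1 i) * L i
  have hG : Continuous G := by fun_prop
  have hG_pm : c < G (p, m) := by simpa [G, hsp] using hc
  obtain ⟨k, hGk, hk⟩ := mem_closure_iff.1 hpm _ (isOpen_lt continuous_const hG) hG_pm
  have hk_sum : ∑ i, k.1 i = 1 := (hK_fst k hk).2
  refine ⟨G k, hGk, ?_⟩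
  have combo_mem : ∑ j : Option ι, j.elim (s k.1) (fun i => p i - s k.1 * k.1 i) •
      j.elim k (fun i => (Pi.single i 1, L i)) ∈ K := by
    refine hK.sum_mem (fun j _ => ?_) ?_ fun j _ => ?_
    · cases j with
      | none => exact hs_nonneg k.1
      | some i => exact sub_nonneg.2 (hs_le k.1 i)
    · simp [Fintype.sum_option, ← Finset.mul_sum, hk_sum, hp_sum]
    · cases j with
      | none => exact hk
      | some i => exact hL i
  convert combo_mem using 1
  ext <;> simp [Fintype.sum_option, Prod.fst_sum, Prod.snd_sum, Finset.sum_apply,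
    Pi.single_apply, G]

section SecondMoment

open scoped RealInnerProductSpace

variable {Ω E : Type*} [MeasurableSpace Ω] [NormedAddCommGroup E] [InnerProductSpace ℝ E]
  {P : Measure Ω} {X Y : Ω → E}

lemma inner_toLp_toLp (hX : MemLp X 2 P) (hY : MemLp Y 2 P) :
    ⟪hX.toLp X, hY.toLp Y⟫ = ∫ ω, ⟪X ω, Y ω⟫ ∂P := by
  rw [L2.inner_def]
  refine integral_congr_ae ?_
  filter_upwards [hX.coeFn_toLp, hY.coeFn_toLp] with ω hXω hYω
  rw [hXω, hYω]

lemma integrable_inner_of_memLp_two (hX : MemLp X 2 P) (hY : MemLp Y 2 P) :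
    Integrable (fun ω => ⟪X ω, Y ω⟫) P := by
  refine (L2.integrable_inner (𝕜 := ℝ) (hX.toLp X) (hY.toLp Y)).congr ?_
  filter_upwards [hX.coeFn_toLp, hY.coeFn_toLp] with ω hXω hYω
  rw [hXω, hYω]

lemma abs_integral_inner_le (hX : MemLp X 2 P) (hY : MemLp Y 2 P) :
    |∫ ω, ⟪X ω, Y ω⟫ ∂P| ≤ (eLpNorm X 2 P).toReal * (eLpNorm Y 2 P).toReal := by
  simpa only [inner_toLp_toLp, Lp.norm_toLp] using
    abs_real_inner_le_norm (hX.toLp X) (hY.toLp Y)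

lemma integral_norm_sub_sq (hX : MemLp X 2 P) (hY : MemLp Y 2 P) :
    ∫ ω, ‖X ω - Y ω‖ ^ 2 ∂P =
      ∫ ω, ‖X ω‖ ^ 2 ∂P + ∫ ω, ‖Y ω‖ ^ 2 ∂P - 2 * ∫ ω, ⟪X ω, Y ω⟫ ∂P := by
  have expand := norm_sub_sq_real (hX.toLp X) (hY.toLp Y)
  rw [← MemLp.toLp_sub] at expand
  simp only [← real_inner_self_eq_norm_sq, inner_toLp_toLp, Pi.sub_apply] at expand ⊢
  linarith

end SecondMoment

section MaxCov

open scoped RealInnerProductSpace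

variable {d : ℕ} {α β : Measure (EuclideanSpace ℝ (Fin d))}
  {π : Measure (EuclideanSpace ℝ (Fin d) × EuclideanSpace ℝ (Fin d))}

lemma measurePreserving_fst_of_mem_couplings (hπ : π ∈ Couplings α β) :
    MeasurePreserving Prod.fst π α :=
  ⟨measurable_fst, hπ.1⟩

lemma measurePreserving_snd_of_mem_couplings (hπ : π ∈ Couplings α β) :
    MeasurePreserving Prod.snd π β :=
  ⟨measurable_snd, hπ.2⟩

lemma prod_mem_couplings [IsProbabilityMeasure α] [IsProbabilityMeasure β] :
    α.prod β ∈ Couplings α β := by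
  constructor <;> simp

lemma map_prodMk_mem_couplings {f : EuclideanSpace ℝ (Fin d) → EuclideanSpace ℝ (Fin d)}
    (hf : Measurable f) : α.map (fun x => (x, f x)) ∈ Couplings α (α.map f) := by
  constructor
  · rw [Measure.map_map measurable_fst (by fun_prop)]
    exact Measure.map_id
  · rw [Measure.map_map measurable_snd (by fun_prop)]
    rfl

/-- The maximal covariance `sup_{π ∈ Π(α,β)} ∫ ⟨x, y⟩ dπ(x, y)`. Maximising it over the couplings is
equivalent to minimising the transport cost that defines `W2sq α β`. -/
def maxCov (α β : Measure (EuclideanSpace ℝ (Fin d))) : ℝ :=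
  sSup {r | ∃ π ∈ Couplings α β, r = ∫ p, ⟪p.1, p.2⟫ ∂π}

lemma memLp_fst_of_mem_couplings (hα : MemLp id 2 α) (hπ : π ∈ Couplings α β) :
    MemLp Prod.fst 2 π :=
  hα.comp_measurePreserving (measurePreserving_fst_of_mem_couplings hπ)

lemma memLp_snd_of_mem_couplings (hβ : MemLp id 2 β) (hπ : π ∈ Couplings α β) :
    MemLp Prod.snd 2 π :=
  hβ.comp_measurePreserving (measurePreserving_snd_of_mem_couplings hπ)

lemma le_maxCov (hα : MemLp id 2 α) (hβ : MemLp id 2 β) (hπ : π ∈ Couplings α β) :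
    ∫ p, ⟪p.1, p.2⟫ ∂π ≤ maxCov α β := by
  refine le_csSup ⟨(eLpNorm id 2 α).toReal * (eLpNorm id 2 β).toReal, ?_⟩ ⟨π, hπ, rfl⟩
  rintro _ ⟨π, hπ, rfl⟩
  have cauchy_schwarz := abs_integral_inner_le
    (memLp_fst_of_mem_couplings hα hπ) (memLp_snd_of_mem_couplings hβ hπ)
  rw [← Function.id_comp Prod.fst, ← Function.id_comp Prod.snd,
    eLpNorm_comp_measurePreserving hα.1 (measurePreserving_fst_of_mem_couplings hπ),
    eLpNorm_comp_measurePreserving hβ.1 (measurePreserving_snd_of_mem_couplings hπ)]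
    at cauchy_schwarz
  exact (le_abs_self _).trans cauchy_schwarz

lemma maxCov_le [IsProbabilityMeasure α] [IsProbabilityMeasure β] {c : ℝ}
    (h : ∀ π ∈ Couplings α β, ∫ p, ⟪p.1, p.2⟫ ∂π ≤ c) : maxCov α β ≤ c := by
  refine csSup_le ⟨_, _, prod_mem_couplings, rfl⟩ ?_
  rintro _ ⟨π, hπ, rfl⟩
  exact h π hπ

lemma integral_norm_sub_sq_of_mem_couplings (hα : MemLp id 2 α) (hβ : MemLp id 2 β)
    (hπ : π ∈ Couplings α β) :
    ∫ p, ‖p.1 - p.2‖ ^ 2 ∂π =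
      ∫ x, ‖x‖ ^ 2 ∂α + ∫ y, ‖y‖ ^ 2 ∂β - 2 * ∫ p, ⟪p.1, p.2⟫ ∂π := by
  rw [integral_norm_sub_sq (memLp_fst_of_mem_couplings hα hπ) (memLp_snd_of_mem_couplings hβ hπ),
    ← hπ.1, ← hπ.2, integral_map (by fun_prop) (by fun_prop),
    integral_map (by fun_prop) (by fun_prop)]

lemma W2sq_eq_sub_maxCov [IsProbabilityMeasure α] [IsProbabilityMeasure β]
    (hα : MemLp id 2 α) (hβ : MemLp id 2 β) :
    W2sq α β = ∫ x, ‖x‖ ^ 2 ∂α + ∫ y, ‖y‖ ^ 2 ∂β - 2 * maxCov α β := by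
  have expand := fun π hπ => integral_norm_sub_sq_of_mem_couplings (π := π) hα hβ hπ
  apply le_antisymm
  · have W2sq_le : ∀ π ∈ Couplings α β, W2sq α β ≤ ∫ p, ‖p.1 - p.2‖ ^ 2 ∂π := fun π hπ =>
      csInf_le ⟨0, by rintro _ ⟨π, -, rfl⟩; positivity⟩ ⟨π, hπ, rfl⟩
    have : maxCov α β ≤ (∫ x, ‖x‖ ^ 2 ∂α + ∫ y, ‖y‖ ^ 2 ∂β - W2sq α β) / 2 :=
      maxCov_le fun π hπ => by linarith [W2sq_le π hπ, expand π hπ]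
    linarith
  · refine le_csInf ⟨_, _, prod_mem_couplings, rfl⟩ ?_
    rintro _ ⟨π, hπ, rfl⟩
    linarith [le_maxCov hα hβ hπ, expand π hπ]

lemma W2sq_sub_W2sq_le_iff {μ ν ρ : Measure (EuclideanSpace ℝ (Fin d))} [IsProbabilityMeasure μ]
    [IsProbabilityMeasure ν] [IsProbabilityMeasure ρ] (hμ : MemLp id 2 μ) (hν : MemLp id 2 ν)
    (hρ : MemLp id 2 ρ) :
    W2sq ν ρ - W2sq μ ρ ≤ ∫ y, ‖y‖ ^ 2 ∂ν - ∫ x, ‖x‖ ^ 2 ∂μ ↔ maxCov μ ρ ≤ maxCov ν ρ := by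
  rw [W2sq_eq_sub_maxCov hμ hρ, W2sq_eq_sub_maxCov hν hρ]
  constructor <;> intro <;> linarith

lemma maxCov_le_of_inner_le [IsProbabilityMeasure α] [IsProbabilityMeasure β]
    {φ ψ : EuclideanSpace ℝ (Fin d) → ℝ} (hα : MemLp id 2 α) (hβ : MemLp id 2 β)
    (hφ : Integrable φ α) (hψ : Integrable ψ β) (h : ∀ᵐ y ∂β, ∀ x, ⟪x, y⟫ ≤ φ x + ψ y) :
    maxCov α β ≤ ∫ x, φ x ∂α + ∫ y, ψ y ∂β := by
  refine maxCov_le fun π hπ => ?_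
  have hfst := measurePreserving_fst_of_mem_couplings hπ
  have hsnd := measurePreserving_snd_of_mem_couplings hπ
  have hφ_int : Integrable (fun p => φ p.1) π := hfst.integrable_comp_of_integrable hφ
  have hψ_int : Integrable (fun p => ψ p.2) π := hsnd.integrable_comp_of_integrable hψ
  calc ∫ p, ⟪p.1, p.2⟫ ∂π ≤ ∫ p, (φ p.1 + ψ p.2) ∂π := by
        refine integral_mono_ae (integrable_inner_of_memLp_two (memLp_fst_of_mem_couplings hα hπ)
          (memLp_snd_of_mem_couplings hβ hπ)) (hφ_int.add hψ_int) ?_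
        filter_upwards [hsnd.quasiMeasurePreserving.ae h] with p hp using hp p.1
    _ = ∫ x, φ x ∂α + ∫ y, ψ y ∂β := by
        rw [integral_add hφ_int hψ_int, ← hπ.1, ← hπ.2, integral_map (by fun_prop) (hπ.1 ▸ hφ.1),
          integral_map (by fun_prop) (hπ.2 ▸ hψ.1)]

end MaxCov

section FiberCoupling

open ProbabilityTheory

variable {Ω Ω' ι : Type*} [MeasurableSpace Ω] [MeasurableSpace Ω'] [Fintype ι]
  {ν : Measure Ω} {ρ : Measure Ω'} {T : Ω' → ι} {w : Ω → ι → ℝ}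

/-- The coupling of `ν` and `ρ` that splits each `y` over the fibers of a finite partition `T`
according to the weights `w y`, and then forgets `y` inside the fiber. Its second marginal is `ρ`
when `∫ w · i dν = ρ(T = i)` for all `i`. -/
def fiberCoupling (ν : Measure Ω) (ρ : Measure Ω') (T : Ω' → ι) (w : Ω → ι → ℝ) :
    Measure (Ω × Ω') :=
  ∑ i, (ν.withDensity fun y => ENNReal.ofReal (w y i)).prod (ρ[|T ← i])

lemma map_fst_fiberCoupling [IsFiniteMeasure ρ] (hT : ∀ i, ρ (T ⁻¹' {i}) ≠ 0)
    (hw : Measurable w) (hw_mem : ∀ y, w y ∈ stdSimplex ℝ ι) :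
    (fiberCoupling ν ρ T w).map Prod.fst = ν := by
  have map_fst : ∀ i, ((ν.withDensity fun y => ENNReal.ofReal (w y i)).prod (ρ[|T ← i])).map
      Prod.fst = ν.withDensity fun y => ENNReal.ofReal (w y i) := fun i =>
    have := cond_isProbabilityMeasure (hT i)
    Measure.fst_prod
  have weights_sum : ∀ y, ∑ i, ENNReal.ofReal (w y i) = 1 := fun y => by
    rw [← ENNReal.ofReal_sum_of_nonneg fun i _ => (hw_mem y).1 i, (hw_mem y).2, ENNReal.ofReal_one]
  rw [fiberCoupling, Measure.map_finset_sum' measurable_fst.aemeasurable]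
  ext s hs
  simp only [map_fst, Measure.coe_finsetSum, Finset.sum_apply, withDensity_apply _ hs]
  rw [← lintegral_finsetSum _ fun i _ => by fun_prop]
  simp [weights_sum]

variable [MeasurableSpace ι] [DiscreteMeasurableSpace ι] [IsFiniteMeasure ν] [IsFiniteMeasure ρ]

lemma map_snd_fiberCoupling (hT : Measurable T)
    (hw : Measurable w) (hw_mem : ∀ y, w y ∈ stdSimplex ℝ ι)
    (hw_int : ∀ i, ∫ y, w y i ∂ν = ρ.real (T ⁻¹' {i})) :
    (fiberCoupling ν ρ T w).map Prod.snd = ρ := by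
  have mass : ∀ i, ∫⁻ y, ENNReal.ofReal (w y i) ∂ν = ρ (T ⁻¹' {i}) := fun i => by
    rw [← ofReal_integral_eq_lintegral_ofReal (integrable_apply_of_mem_stdSimplex hw hw_mem i)
      (.of_forall fun y => (hw_mem y).1 i), hw_int, ofReal_measureReal]
  rw [fiberCoupling, Measure.map_finset_sum' measurable_snd.aemeasurable]
  simp [Measure.map_snd_prod, mass, sum_meas_smul_cond_fiber hT]

lemma integral_fiberCoupling (hT : Measurable T) (hT_ne : ∀ i, ρ (T ⁻¹' {i}) ≠ 0)
    (hw : Measurable w) (hw_mem : ∀ y, w y ∈ stdSimplex ℝ ι) {g : ι → Ω → ℝ}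
    (hg : ∀ i, Integrable (g i) ν) :
    ∫ q, g (T q.2) q.1 ∂fiberCoupling ν ρ T w = ∫ y, ∑ i, w y i * g i y ∂ν := by
  have hcond : ∀ i, IsProbabilityMeasure (ρ[|T ← i]) := fun i =>
    cond_isProbabilityMeasure (hT_ne i)
  let νw : ι → Measure Ω := fun i => ν.withDensity fun y => ENNReal.ofReal (w y i)
  have toReal_weight : ∀ i y,
      (ENNReal.ofReal (w y i)).toReal • g i y = w y i * g i y := fun i y => by
    rw [ENNReal.toReal_ofReal ((hw_mem y).1 i), smul_eq_mul]
  have mul_integrable : ∀ i, Integrable (fun y => w y i * g i y) ν := fun i =>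
    integrable_smul_of_mem_stdSimplex hw hw_mem (hg i) i
  have density_integrable : ∀ i, Integrable (g i) (νw i) := fun i => by
    rw [integrable_withDensity_iff_integrable_smul' (by fun_prop) (by simp)]
    simpa only [toReal_weight] using mul_integrable i
  have density_integral : ∀ i, ∫ y, g i y ∂νw i = ∫ y, w y i * g i y ∂ν := fun i => by
    simp only [νw, integral_withDensity_eq_integral_toReal_smul (by fun_prop : Measurable fun y =>
      ENNReal.ofReal (w y i)) (by simp), toReal_weight]
  have fiber_ae : ∀ i, (fun q => g i q.1) =ᵐ[(νw i).prod (ρ[|T ← i])] fun q => g (T q.2) q.1 :=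
    fun i => by
      filter_upwards [Measure.quasiMeasurePreserving_snd.ae
        (ae_cond_mem (hT (measurableSet_singleton i)))] with q hq
      rw [show T q.2 = i from hq]
  rw [fiberCoupling, integral_finsetSum_measure fun i _ =>
    ((density_integrable i).comp_fst _).congr (fiber_ae i),
    integral_finsetSum _ fun i _ => mul_integrable i]
  refine Finset.sum_congr rfl fun i _ => ?_
  rw [← integral_congr_ae (fiber_ae i), integral_fun_fst, probReal_univ, one_smul, density_integral]

end FiberCoupling

section ConvexOrder

lemma convexOn_iSup {ι E : Type*} [Finite ι] [Nonempty ι] [AddCommGroup E] [Module ℝ E]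
    {s : Set E} {g : ι → E → ℝ} (hg : ∀ i, ConvexOn ℝ s (g i)) :
    ConvexOn ℝ s fun x => ⨆ i, g i x := by
  obtain ⟨i₀⟩ := ‹Nonempty ι›
  refine ⟨(hg i₀).1, fun x hx y hy a b ha hb hab => ciSup_le fun i => ?_⟩
  calc g i (a • x + b • y) ≤ a • g i x + b • g i y := (hg i).2 hx hy ha hb hab
    _ ≤ a • (⨆ i, g i x) + b • ⨆ i, g i y := by
      gcongr
      · exact Finite.le_ciSup (fun i => g i x) i
      · exact Finite.le_ciSup (fun i => g i y) i

variable {d : ℕ} {μ ν : Measure (EuclideanSpace ℝ (Fin d))}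

lemma ConvexOrder.integral_affine_mem_closure_aumannIntegral {Ω ι V : Type*} [MeasurableSpace Ω]
    [Fintype ι] [Nonempty ι] [MeasurableSpace ι] [DiscreteMeasurableSpace ι]
    [NormedAddCommGroup V] [NormedSpace ℝ V] [CompleteSpace V]
    [IsFiniteMeasure μ] [IsFiniteMeasure ν] (h : ConvexOrder μ ν)
    (hμ : Integrable id μ) (hν : Integrable id ν) {P : Measure Ω}
    {Y : Ω → EuclideanSpace ℝ (Fin d)} (hY : MeasurePreserving Y P μ) {J : Ω → ι}
    (hJ : Measurable J) (L : ι → EuclideanSpace ℝ (Fin d) →L[ℝ] V) (v : ι → V) :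
    ∫ ω, (L (J ω) (Y ω) + v (J ω)) ∂P ∈ closure (aumannIntegral ν fun i y => L i y + v i) := by
  have affine_continuous : ∀ i, Continuous fun y => L i y + v i := fun i => by fun_prop
  have affine_integrable : ∀ {α : Measure (EuclideanSpace ℝ (Fin d))} [IsFiniteMeasure α],
      Integrable id α → ∀ i, Integrable (fun y => L i y + v i) α := fun hα i =>
    ((L i).integrable_comp hα).add (integrable_const _)
  refine mem_closure_aumannIntegral (fun i => (affine_continuous i).stronglyMeasurable)
    (affine_integrable hν) fun f => ?_
  let F : EuclideanSpace ℝ (Fin d) → ℝ := fun y => ⨆ i, f (L i y + v i)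
  have hF_int : ∀ {α : Measure (EuclideanSpace ℝ (Fin d))} [IsFiniteMeasure α],
      Integrable id α → Integrable F α := fun hα =>
    integrable_iSup (fun i => (f.continuous.comp (affine_continuous i)).measurable) fun i =>
      f.integrable_comp (affine_integrable hα i)
  have hF_convex : ConvexOn ℝ Set.univ F := convexOn_iSup fun i =>
    (((f.comp (L i)).toLinearMap.convexOn convex_univ).add_const (f (v i))).congr fun y _ =>
      (map_add f (L i y) (v i)).symm
  have selection_integrable : Integrable (fun ω => L (J ω) (Y ω) + v (J ω)) P :=
    integrable_selection (X := fun i ω => L i (Y ω) + v i) hJ fun i =>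
      hY.integrable_comp_of_integrable (affine_integrable hμ i)
  calc f (∫ ω, (L (J ω) (Y ω) + v (J ω)) ∂P) = ∫ ω, f (L (J ω) (Y ω) + v (J ω)) ∂P :=
        (f.integral_comp_comm selection_integrable).symm
    _ ≤ ∫ ω, F (Y ω) ∂P :=
        integral_mono (f.integrable_comp selection_integrable)
          (hY.integrable_comp_of_integrable (hF_int hμ)) fun ω =>
          Finite.le_ciSup (fun i => f (L i (Y ω) + v i)) (J ω)
    _ = ∫ y, F y ∂μ := by
        rw [← hY.map_eq, integral_map hY.aemeasurable (hY.map_eq ▸ (hF_int hμ).1)]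
    _ ≤ ∫ y, F y ∂ν := h F hF_convex (hF_int hμ) (hF_int hν)

end ConvexOrder

section Semidiscrete

open scoped RealInnerProductSpace

section Weights

variable {Ω ι : Type*} [MeasurableSpace Ω] [Fintype ι] [DecidableEq ι] {P : Measure Ω}
  {g : ι → Ω → ℝ} {p : ι → ℝ} {c m : ℝ}

lemma mk_mem_aumannIntegral_single_iff [IsFiniteMeasure P] (hg : ∀ i, Integrable (g i) P) :
    (p, m) ∈ aumannIntegral P (fun i ω => ((Pi.single i 1, g i ω) : (ι → ℝ) × ℝ)) ↔
      ∃ w : Ω → ι → ℝ, Measurable w ∧ (∀ ω, w ω ∈ stdSimplex ℝ ι) ∧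
        (∀ i, ∫ ω, w ω i ∂P = p i) ∧ ∫ ω, ∑ i, w ω i * g i ω ∂P = m := by
  refine exists_congr fun w => and_congr_right fun hw => and_congr_right fun hw_mem => ?_
  have w_integrable := integrable_apply_of_mem_stdSimplex (P := P) hw hw_mem
  have sum_integrable : Integrable (fun ω => ∑ i, w ω i * g i ω) P :=
    integrable_sum_smul_of_mem_stdSimplex hw hw_mem hg
  have sum_eq : ∀ ω, ∑ i, w ω i • ((Pi.single i 1, g i ω) : (ι → ℝ) × ℝ) =
      (w ω, ∑ i, w ω i * g i ω) := fun ω => by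
    ext <;> simp [Prod.fst_sum, Prod.snd_sum, Finset.sum_apply, Pi.single_apply]
  simp only [sum_eq]
  rw [integral_pair (.of_eval w_integrable) sum_integrable, Prod.mk_inj, funext_iff]
  simp only [eval_integral w_integrable, eq_comm]

lemma exists_weights_of_mem_closure_aumannIntegral [IsProbabilityMeasure P]
    (hg : ∀ i, Integrable (g i) P) (hp : ∀ i, 0 < p i) (hc : c < m)
    (hpm : (p, m) ∈
      closure (aumannIntegral P fun i ω => ((Pi.single i 1, g i ω) : (ι → ℝ) × ℝ))) :
    ∃ w : Ω → ι → ℝ, Measurable w ∧ (∀ ω, w ω ∈ stdSimplex ℝ ι) ∧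
      (∀ i, ∫ ω, w ω i ∂P = p i) ∧ c < ∫ ω, ∑ i, w ω i * g i ω ∂P := by
  have fst_mem : ∀ k ∈ aumannIntegral P (fun i ω => ((Pi.single i 1, g i ω) : (ι → ℝ) × ℝ)),
      k.1 ∈ stdSimplex ℝ ι := by
    rintro ⟨q, r⟩ hqr
    obtain ⟨w, hw, hw_mem, hw_int, -⟩ := (mk_mem_aumannIntegral_single_iff hg).1 hqr
    obtain rfl : (fun i => ∫ ω, w ω i ∂P) = q := funext hw_int
    refine ⟨fun i => integral_nonneg fun ω => (hw_mem ω).1 i, ?_⟩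
    rw [← integral_finsetSum _ fun i _ => integrable_apply_of_mem_stdSimplex hw hw_mem i]
    simp [(hw_mem _).2]
  obtain ⟨r, hcr, hr⟩ := exists_lt_mem_of_mem_closure
    (convex_aumannIntegral fun i => (integrable_const _).prodMk (hg i)) fst_mem
    (L := fun i => ∫ ω, g i ω ∂P)
    (fun i => (mk_mem_aumannIntegral_single_iff hg).2 ⟨fun _ => Pi.single i 1, measurable_const,
      fun _ => single_mem_stdSimplex ℝ i, by simp, by simp [Pi.single_apply]⟩) hpm hp hc
  obtain ⟨w, hw, hw_mem, hw_int, rfl⟩ := (mk_mem_aumannIntegral_single_iff hg).1 hr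
  exact ⟨w, hw, hw_mem, hw_int, hcr⟩

lemma integral_single_prodMk_selection [MeasurableSpace ι] [DiscreteMeasurableSpace ι]
    [IsFiniteMeasure P] (hg : ∀ i, Integrable (g i) P) {J : Ω → ι} (hJ : Measurable J) :
    ∫ ω, ((Pi.single (J ω) 1, g (J ω) ω) : (ι → ℝ) × ℝ) ∂P =
      (fun i => P.real (J ⁻¹' {i}), ∫ ω, g (J ω) ω ∂P) := by
  have single_measurable : Measurable fun ω => (Pi.single (J ω) 1 : ι → ℝ) :=
    (Measurable.of_discrete (f := fun i : ι => (Pi.single i 1 : ι → ℝ))).comp hJ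
  have single_integrable := integrable_apply_of_mem_stdSimplex (P := P) single_measurable
    fun ω => single_mem_stdSimplex ℝ (J ω)
  have single_eq : ∀ i ω, (Pi.single (J ω) 1 : ι → ℝ) i = (J ⁻¹' {i}).indicator 1 ω :=
    fun i ω => by classical simp [Pi.single_apply, Set.indicator_apply, @eq_comm _ i]
  rw [integral_pair (.of_eval single_integrable) (integrable_selection hJ hg), Prod.mk_inj]
  refine ⟨funext fun i => ?_, rfl⟩
  simp only [eval_integral single_integrable, single_eq,
    integral_indicator_one (hJ (measurableSet_singleton i))]

end Weights

variable {d : ℕ} {μ ν ρ : Measure (EuclideanSpace ℝ (Fin d))}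
  [IsFiniteMeasure μ] [IsProbabilityMeasure ν]
  {π : Measure (EuclideanSpace ℝ (Fin d) × EuclideanSpace ℝ (Fin d))}
  {ι : Type*} [MeasurableSpace ι] [DiscreteMeasurableSpace ι]
  {T : EuclideanSpace ℝ (Fin d) → ι}

lemma ConvexOrder.mk_mem_closure_aumannIntegral [Fintype ι] [DecidableEq ι] [Nonempty ι]
    (h : ConvexOrder μ ν) (hμ : Integrable id μ) (hν : Integrable id ν) (hπ : π ∈ Couplings μ ρ)
    (hT : Measurable T) (a : ι → EuclideanSpace ℝ (Fin d)) :
    ((fun i => ρ.real (T ⁻¹' {i}), ∫ p, ⟪p.1, a (T p.2)⟫ ∂π) : (ι → ℝ) × ℝ) ∈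
      closure (aumannIntegral ν fun i y => ((Pi.single i 1, ⟪y, a i⟫) : (ι → ℝ) × ℝ)) := by
  have hfst := measurePreserving_fst_of_mem_couplings hπ
  have hsnd := measurePreserving_snd_of_mem_couplings hπ
  have : IsFiniteMeasure (π.map Prod.fst) := by rwa [hπ.1]
  have : IsFiniteMeasure π := Measure.isFiniteMeasure_of_map measurable_fst.aemeasurable
  have hJ : Measurable fun p : EuclideanSpace ℝ (Fin d) × EuclideanSpace ℝ (Fin d) => T p.2 :=
    hT.comp measurable_snd
  let L : ι → EuclideanSpace ℝ (Fin d) →L[ℝ] (ι → ℝ) × ℝ := fun i =>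
    (ContinuousLinearMap.inr ℝ (ι → ℝ) ℝ).comp (innerSL ℝ (a i))
  have affine_eq : ∀ i y, L i y + (Pi.single i 1, 0) = (Pi.single i 1, ⟪y, a i⟫) := fun i y => by
    simp [L, real_inner_comm]
  have fiber_eq : ∀ i, ρ.real (T ⁻¹' {i}) = π.real ((fun p => T p.2) ⁻¹' {i}) := fun i =>
    (hsnd.measureReal_preimage (hT (measurableSet_singleton i)).nullMeasurableSet).symm
  have mem_closure := h.integral_affine_mem_closure_aumannIntegral hμ hν hfst hJ L
    fun i => (Pi.single i 1, 0)
  simp only [affine_eq] at mem_closure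
  rwa [integral_single_prodMk_selection (g := fun i p => ⟪p.1, a i⟫) (fun i =>
    hfst.integrable_comp_of_integrable (hμ.inner_const (a i))) hJ, ← funext fiber_eq] at mem_closure

lemma ConvexOrder.exists_mem_couplings_lt_integral_inner [Finite ι] [Nonempty ι]
    [IsFiniteMeasure ρ] (h : ConvexOrder μ ν) (hμ : Integrable id μ) (hν : Integrable id ν)
    (hπ : π ∈ Couplings μ ρ) (hT : Measurable T) (hT_ne : ∀ i, ρ (T ⁻¹' {i}) ≠ 0)
    (a : ι → EuclideanSpace ℝ (Fin d)) {c : ℝ} (hc : c < ∫ p, ⟪p.1, a (T p.2)⟫ ∂π) :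
    ∃ π' ∈ Couplings ν ρ, c < ∫ q, ⟪q.1, a (T q.2)⟫ ∂π' := by
  classical
  cases nonempty_fintype ι
  have inner_integrable : ∀ i, Integrable (fun y => ⟪y, a i⟫) ν := fun i => hν.inner_const (a i)
  obtain ⟨w, hw, hw_mem, hw_int, hcw⟩ := exists_weights_of_mem_closure_aumannIntegral
    inner_integrable (fun i => ENNReal.toReal_pos (hT_ne i) (measure_ne_top _ _)) hc
    (h.mk_mem_closure_aumannIntegral hμ hν hπ hT a)
  refine ⟨fiberCoupling ν ρ T w, ⟨map_fst_fiberCoupling hT_ne hw hw_mem,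
    map_snd_fiberCoupling hT hw hw_mem hw_int⟩, ?_⟩
  rwa [integral_fiberCoupling hT hT_ne hw hw_mem inner_integrable]

end Semidiscrete

lemma exists_simpleFunc_ae_eq_measure_fiber_ne_zero {Ω β : Type*} [MeasurableSpace Ω]
    (P : Measure Ω) [NeZero P] (s : SimpleFunc Ω β) :
    ∃ t : SimpleFunc Ω β, t =ᵐ[P] s ∧ ∀ b ∈ t.range, P (t ⁻¹' {b}) ≠ 0 := by
  classical
  have fiber_ne_zero : ∀ᵐ ω ∂P, P (s ⁻¹' {s ω}) ≠ 0 := by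
    have : ∀ b ∈ s.range, ∀ᵐ ω ∂P, s ω = b → P (s ⁻¹' {b}) ≠ 0 := fun b _ => by
      by_cases hb : P (s ⁻¹' {b}) = 0
      · filter_upwards [measure_eq_zero_iff_ae_notMem.1 hb] with ω hω hωb using absurd hωb hω
      · exact .of_forall fun _ _ => hb
    filter_upwards [(Filter.eventually_all_finset s.range).2 this] with ω hω using
      hω _ (s.mem_range_self ω) rfl
  obtain ⟨ω₀, hω₀⟩ := fiber_ne_zero.exists
  let r : β → β := fun b => if P (s ⁻¹' {b}) = 0 then s ω₀ else b
  have fiber_r_ne_zero : ∀ b, P (s ⁻¹' {r b}) ≠ 0 := fun b => by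
    unfold r; split_ifs with hb
    exacts [hω₀, hb]
  have r_r : ∀ b, r (r b) = r b := fun b => if_neg (fiber_r_ne_zero b)
  refine ⟨s.map r, ?_, ?_⟩
  · filter_upwards [fiber_ne_zero] with ω hω using if_neg hω
  · simp only [SimpleFunc.mem_range, Set.forall_mem_range, SimpleFunc.map_apply]
    refine fun ω => mt (measure_mono_null fun ω' hω' => ?_) (fiber_r_ne_zero (s ω))
    simpa [r_r] using congrArg r hω'

lemma exists_simpleFunc_eLpNorm_sub_lt_measure_fiber_ne_zero {Ω E : Type*} [MeasurableSpace Ω]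
    [NormedAddCommGroup E] {P : Measure Ω} [NeZero P] {p : ENNReal} {f : Ω → E} (hf : MemLp f p P)
    (hp : p ≠ ⊤) {δ : ℝ} (hδ : 0 < δ) :
    ∃ t : SimpleFunc Ω E, MemLp t p P ∧ (eLpNorm (f - ⇑t) p P).toReal < δ ∧
      ∀ b ∈ t.range, P (t ⁻¹' {b}) ≠ 0 := by
  obtain ⟨s, hs_lt, hs⟩ := hf.exists_simpleFunc_eLpNorm_sub_lt hp (ENNReal.ofReal_pos.2 hδ).ne'
  obtain ⟨t, hts, ht_ne⟩ := exists_simpleFunc_ae_eq_measure_fiber_ne_zero P s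
  refine ⟨t, (memLp_congr_ae hts).2 hs, ?_, ht_ne⟩
  rw [eLpNorm_congr_ae (Filter.EventuallyEq.rfl.sub hts)]
  exact (ENNReal.lt_ofReal_iff_toReal_lt hs_lt.ne_top).1 hs_lt

section MaxCovMono

open scoped RealInnerProductSpace

variable {d : ℕ} {α β μ ν ρ : Measure (EuclideanSpace ℝ (Fin d))}
  {π : Measure (EuclideanSpace ℝ (Fin d) × EuclideanSpace ℝ (Fin d))}

lemma abs_integral_inner_sub_le (hα : MemLp id 2 α) (hβ : MemLp id 2 β)
    {t : EuclideanSpace ℝ (Fin d) → EuclideanSpace ℝ (Fin d)} (ht : MemLp t 2 β)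
    (hπ : π ∈ Couplings α β) :
    |∫ p, ⟪p.1, p.2⟫ ∂π - ∫ p, ⟪p.1, t p.2⟫ ∂π| ≤
      (eLpNorm id 2 α).toReal * (eLpNorm (id - t) 2 β).toReal := by
  have hfst := measurePreserving_fst_of_mem_couplings hπ
  have hsnd := measurePreserving_snd_of_mem_couplings hπ
  have fst_memLp : MemLp (fun p => p.1) 2 π := memLp_fst_of_mem_couplings hα hπ
  have snd_memLp : MemLp (fun p => p.2) 2 π := memLp_snd_of_mem_couplings hβ hπ
  have t_memLp : MemLp (fun p => t p.2) 2 π := ht.comp_measurePreserving hsnd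
  rw [← integral_sub (integrable_inner_of_memLp_two fst_memLp snd_memLp)
    (integrable_inner_of_memLp_two fst_memLp t_memLp)]
  simp only [← inner_sub_right]
  rw [← eLpNorm_comp_measurePreserving hα.1 hfst,
    ← eLpNorm_comp_measurePreserving (hβ.1.sub ht.1) hsnd]
  exact abs_integral_inner_le fst_memLp (snd_memLp.sub t_memLp)

lemma ConvexOrder.maxCov_le_maxCov [IsProbabilityMeasure μ] [IsProbabilityMeasure ν]
    [IsProbabilityMeasure ρ] (h : ConvexOrder μ ν) (hμ : MemLp id 2 μ) (hν : MemLp id 2 ν)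
    (hρ : MemLp id 2 ρ) : maxCov μ ρ ≤ maxCov ν ρ := by
  refine maxCov_le fun π hπ => le_of_forall_pos_le_add fun ε hε => ?_
  let M := (eLpNorm id 2 μ).toReal + (eLpNorm id 2 ν).toReal + 1
  have hM : 0 < M := by positivity
  obtain ⟨t, ht, ht_lt, ht_ne⟩ :=
    exists_simpleFunc_eLpNorm_sub_lt_measure_fiber_ne_zero hρ ENNReal.ofNat_ne_top
      (div_pos hε hM)
  let T : EuclideanSpace ℝ (Fin d) → t.range := fun z => ⟨t z, t.mem_range_self z⟩
  have hT_ne : ∀ i, ρ (T ⁻¹' {i}) ≠ 0 := fun i => by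
    have : T ⁻¹' {i} = t ⁻¹' {(i : EuclideanSpace ℝ (Fin d))} := by ext; simp [T, Subtype.ext_iff]
    exact this ▸ ht_ne i i.2
  have : Nonempty t.range := ⟨T 0⟩
  obtain ⟨π', hπ', hlt⟩ := h.exists_mem_couplings_lt_integral_inner
    (hμ.integrable one_le_two) (hν.integrable one_le_two) hπ (t.measurable.subtype_mk) hT_ne
    Subtype.val (sub_lt_self (∫ p, ⟪p.1, t p.2⟫ ∂π) (div_pos hε hM))
  have hπ_le := (le_abs_self _).trans (abs_integral_inner_sub_le hμ hρ ht hπ)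
  have hπ'_le := (neg_le_abs _).trans (abs_integral_inner_sub_le hν hρ ht hπ')
  have error_le : ∀ x : ENNReal, x.toReal * (eLpNorm (id - ⇑t) 2 ρ).toReal ≤
      x.toReal * (ε / M) := fun x => by gcongr
  have error_sum : ((eLpNorm id 2 μ).toReal + (eLpNorm id 2 ν).toReal + 1) * (ε / M) = ε :=
    mul_div_cancel₀ ε hM.ne'
  linarith [error_le (eLpNorm id 2 μ), error_le (eLpNorm id 2 ν), le_maxCov hν hρ hπ']

end MaxCovMono

section ConvexOrderOfMaxCov

open Filter Set Topology
open scoped RealInnerProductSpace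

variable {d : ℕ} {μ ν : Measure (EuclideanSpace ℝ (Fin d))}

lemma memLp_of_measure_compl_closedBall_eq_zero {E : Type*} [NormedAddCommGroup E]
    [MeasurableSpace E] [OpensMeasurableSpace E] [SecondCountableTopology E] {ρ : Measure E}
    [IsFiniteMeasure ρ] {R : ℝ} (hR : ρ (closedBall 0 R)ᶜ = 0) (p : ENNReal) : MemLp id p ρ :=
  .of_bound aestronglyMeasurable_id R <| by
    filter_upwards [mem_ae_iff.2 hR] with x hx using mem_closedBall_zero_iff.1 hx

lemma exists_map_compl_closedBall_eq_zero {Ω E : Type*} [MeasurableSpace Ω]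
    [SeminormedAddCommGroup E] [MeasurableSpace E] [OpensMeasurableSpace E] (P : Measure Ω)
    {f : Ω → E} (hf : Measurable f) (hf_bdd : Bornology.IsBounded (range f)) :
    ∃ R : ℝ, P.map f (closedBall 0 R)ᶜ = 0 := by
  obtain ⟨R, hR⟩ := hf_bdd.subset_closedBall 0
  refine ⟨R, ?_⟩
  rw [Measure.map_apply hf measurableSet_closedBall.compl, preimage_compl,
    preimage_eq_univ_iff.2 hR, compl_univ, measure_empty]

lemma exists_measurable_comp_eq_of_finite_range {X Y Z : Type*} [MeasurableSpace Y]
    [MeasurableSingletonClass Y] [MeasurableSpace Z] [Nonempty Z] {f : X → Y} {g : X → Z}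
    (hf : (range f).Finite) (hg : g.FactorsThrough f) :
    ∃ h : Y → Z, Measurable h ∧ ∀ x, h (f x) = g x := by
  let z : Z := Classical.arbitrary Z
  refine ⟨f.extend g fun _ => z, ?_, hg.extend_apply _⟩
  refine (measurable_const (a := z)).measurable_of_countable_ne <| hf.countable.mono fun y hy => ?_
  exact not_not.1 fun hyf => hy (Function.extend_apply' g (fun _ => z) y hyf).symm

lemma integrable_iSup_affine {α : Measure (EuclideanSpace ℝ (Fin d))} [IsFiniteMeasure α]
    (hα : Integrable id α) {ι : Type*} [Finite ι] [Nonempty ι]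
    (a : ι → EuclideanSpace ℝ (Fin d)) (b : ι → ℝ) :
    Integrable (fun x => ⨆ i, (⟪x, a i⟫ + b i)) α :=
  integrable_iSup (fun i => by fun_prop) fun i =>
    (hα.inner_const (a i)).add (integrable_const (b i))

lemma exists_integral_iSup_affine_le_maxCov_add [IsProbabilityMeasure μ] (hμ : MemLp id 2 μ)
    {ι : Type*} [Finite ι] [Nonempty ι] (a : ι → EuclideanSpace ℝ (Fin d)) (b : ι → ℝ) :
    ∃ (ρ : Measure (EuclideanSpace ℝ (Fin d))) (B : EuclideanSpace ℝ (Fin d) → ℝ),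
      IsProbabilityMeasure ρ ∧ (∃ R : ℝ, ρ (closedBall 0 R)ᶜ = 0) ∧ Integrable B ρ ∧
      (∀ᵐ y ∂ρ, ∀ x, ⟪x, y⟫ + B y ≤ ⨆ i, (⟪x, a i⟫ + b i)) ∧
      ∫ x, ⨆ i, (⟪x, a i⟫ + b i) ∂μ ≤ maxCov μ ρ + ∫ y, B y ∂ρ := by
  let _ : MeasurableSpace ι := ⊤
  obtain ⟨J, hJ, iSup_eq⟩ := exists_measurable_iSup_eq
    (g := fun i (x : EuclideanSpace ℝ (Fin d)) => ⟪x, a i⟫ + b i) fun i => by fun_prop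
  have affine_le_iSup : ∀ x i, ⟪x, a i⟫ + b i ≤ ⨆ i, (⟪x, a i⟫ + b i) := fun x =>
    Finite.le_ciSup fun i => ⟪x, a i⟫ + b i
  have haJ : Measurable fun x => a (J x) := Measurable.of_discrete.comp hJ
  have range_finite : (range fun x => a (J x)).Finite :=
    (finite_range a).subset (range_comp_subset_range J a)
  have mem_range_ae : ∀ᵐ y ∂μ.map fun x => a (J x), y ∈ range fun x => a (J x) :=
    (ae_map_iff haJ.aemeasurable range_finite.measurableSet).2 <| .of_forall mem_range_self
  obtain ⟨R, hR⟩ := exists_map_compl_closedBall_eq_zero μ haJ range_finite.isBounded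
  have b_factors : Function.FactorsThrough (fun x => b (J x)) fun x => a (J x) :=
    fun x z (hxz : a (J x) = a (J z)) => by
      have hx := affine_le_iSup x (J z)
      have hz := affine_le_iSup z (J x)
      rw [iSup_eq, hxz] at hx hz
      linarith
  obtain ⟨B, hB, B_eq⟩ := exists_measurable_comp_eq_of_finite_range range_finite b_factors
  have B_integrable : Integrable (fun x => B (a (J x))) μ := by
    simpa only [B_eq] using
      integrable_selection (X := fun i _ => b i) hJ fun i => integrable_const (b i)
  have inner_integrable : Integrable (fun x => ⟪x, a (J x)⟫) μ :=
    integrable_selection (X := fun i x => ⟪x, a i⟫) hJ fun i =>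
      (hμ.integrable one_le_two).inner_const (a i)
  have hρ_prob : IsProbabilityMeasure (μ.map fun x => a (J x)) :=
    Measure.isProbabilityMeasure_map haJ.aemeasurable
  refine ⟨μ.map fun x => a (J x), B, hρ_prob, ⟨R, hR⟩,
    (integrable_map_measure hB.aestronglyMeasurable haJ.aemeasurable).2 B_integrable, ?_, ?_⟩
  · filter_upwards [mem_range_ae] with y hy x
    obtain ⟨z, rfl⟩ := hy
    exact (B_eq z).symm ▸ affine_le_iSup x (J z)
  · calc ∫ x, ⨆ i, (⟪x, a i⟫ + b i) ∂μ
      _ = ∫ x, ⟪x, a (J x)⟫ ∂μ + ∫ x, B (a (J x)) ∂μ := by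
          simp only [iSup_eq, ← B_eq, integral_add inner_integrable B_integrable]
      _ = ∫ p, ⟪p.1, p.2⟫ ∂μ.map (fun x => (x, a (J x))) + ∫ y, B y ∂μ.map fun x => a (J x) := by
          rw [integral_map (by fun_prop) (by fun_prop),
            integral_map haJ.aemeasurable hB.aestronglyMeasurable]
      _ ≤ maxCov μ (μ.map fun x => a (J x)) + ∫ y, B y ∂μ.map fun x => a (J x) := by
          gcongr
          exact le_maxCov hμ (memLp_of_measure_compl_closedBall_eq_zero hR 2)
            (map_prodMk_mem_couplings haJ)

lemma integral_iSup_affine_le_of_maxCov_le [IsProbabilityMeasure μ] [IsProbabilityMeasure ν]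
    (hμ : MemLp id 2 μ) (hν : MemLp id 2 ν)
    (h : ∀ ρ : Measure (EuclideanSpace ℝ (Fin d)), IsProbabilityMeasure ρ →
      (∃ R : ℝ, ρ (closedBall 0 R)ᶜ = 0) → maxCov μ ρ ≤ maxCov ν ρ)
    {ι : Type*} [Finite ι] [Nonempty ι] (a : ι → EuclideanSpace ℝ (Fin d)) (b : ι → ℝ) :
    ∫ x, ⨆ i, (⟪x, a i⟫ + b i) ∂μ ≤ ∫ x, ⨆ i, (⟪x, a i⟫ + b i) ∂ν := by
  obtain ⟨ρ, B, hρ_prob, ⟨R, hR⟩, hB, hB_le, hμ_le⟩ :=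
    exists_integral_iSup_affine_le_maxCov_add hμ a b
  have hν_le := maxCov_le_of_inner_le hν (memLp_of_measure_compl_closedBall_eq_zero hR 2)
    (integrable_iSup_affine (hν.integrable one_le_two) a b) hB.neg <| by
      filter_upwards [hB_le] with y hy x using le_sub_iff_add_le.2 (hy x)
  simp only [Pi.neg_apply, integral_neg] at hν_le
  linarith [h ρ hρ_prob ⟨R, hR⟩]

lemma exists_tendsto_iSup_affine {E : Type*} [NormedAddCommGroup E] [InnerProductSpace ℝ E]
    [FiniteDimensional ℝ E] {f : E → ℝ} (hf : ConvexOn ℝ univ f) :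
    ∃ (a : ℕ → E) (c : ℕ → ℝ), ∀ x,
      Monotone (fun n : ℕ => ⨆ i : Iic n, (⟪x, a i⟫ + c i)) ∧
      Tendsto (fun n : ℕ => ⨆ i : Iic n, (⟪x, a i⟫ + c i)) atTop (𝓝 (f x)) := by
  obtain ⟨l, c, hle, hsup⟩ := hf.real_univ_sSup_of_nat_affine_eq
    hf.locallyLipschitz.continuous.lowerSemicontinuous
  refine ⟨fun n => (InnerProductSpace.toDual ℝ E).symm (l n), c, fun x => ?_⟩
  have inner_eq : ∀ n, ⟪x, (InnerProductSpace.toDual ℝ E).symm (l n)⟫ = l n x := fun n => by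
    rw [real_inner_comm, InnerProductSpace.toDual_symm_apply]
  simp only [inner_eq]
  have isLUB_x : IsLUB (range fun n => l n x + c n) (f x) := by
    have := isLUB_ciSup (f := fun n => ⇑(l n) + Function.const E (c n))
      ⟨f, forall_mem_range.2 hle⟩
    rw [hsup] at this
    simpa [← range_comp, Function.comp_def] using (isLUB_pi.1 this) x
  have le_partial : ∀ n i, i ≤ n → l i x + c i ≤ ⨆ i : Iic n, (l i x + c i) := fun n i hi =>
    Finite.le_ciSup (fun i : Iic n => l i x + c i) ⟨i, hi⟩
  have hmono : Monotone fun n : ℕ => ⨆ i : Iic n, (l i x + c i) := fun m n hmn =>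
    ciSup_le fun i => le_partial n i (i.2.trans hmn)
  refine ⟨hmono, tendsto_atTop_isLUB hmono ⟨?_, fun u hu => isLUB_x.2 ?_⟩⟩
  · rintro _ ⟨n, rfl⟩
    exact ciSup_le fun i => isLUB_x.1 ⟨i, rfl⟩
  · rintro _ ⟨n, rfl⟩
    exact (le_partial n n le_rfl).trans (hu ⟨n, rfl⟩)

lemma convexOrder_of_maxCov_le [IsProbabilityMeasure μ] [IsProbabilityMeasure ν]
    (hμ : MemLp id 2 μ) (hν : MemLp id 2 ν)
    (h : ∀ ρ : Measure (EuclideanSpace ℝ (Fin d)), IsProbabilityMeasure ρ →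
      (∃ R : ℝ, ρ (closedBall 0 R)ᶜ = 0) → maxCov μ ρ ≤ maxCov ν ρ) :
    ConvexOrder μ ν := by
  intro f hf hfμ hfν
  obtain ⟨a, c, hF⟩ := exists_tendsto_iSup_affine hf
  have integral_tendsto : ∀ {α : Measure (EuclideanSpace ℝ (Fin d))} [IsFiniteMeasure α],
      Integrable id α → Integrable f α → Tendsto
      (fun n : ℕ => ∫ x, ⨆ i : Iic n, (⟪x, a i⟫ + c i) ∂α) atTop (𝓝 (∫ x, f x ∂α)) :=
    fun hα hfα => integral_tendsto_of_tendsto_of_monotone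
      (fun n => integrable_iSup_affine hα (fun i : Iic n => a i) fun i => c i) hfα
      (.of_forall fun x => (hF x).1) (.of_forall fun x => (hF x).2)
  exact le_of_tendsto_of_tendsto' (integral_tendsto (hμ.integrable one_le_two) hfμ)
    (integral_tendsto (hν.integrable one_le_two) hfν) fun n =>
    integral_iSup_affine_le_of_maxCov_le hμ hν h (fun i : Iic n => a i) fun i => c i

end ConvexOrderOfMaxCov

theorem stmt1 (d : ℕ) (hd : 1 ≤ d)
    (μ ν : Measure (EuclideanSpace ℝ (Fin d)))
    [IsProbabilityMeasure μ] [IsProbabilityMeasure ν]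
    (hμ : Integrable (fun x => ‖x‖ ^ 2) μ) (hν : Integrable (fun y => ‖y‖ ^ 2) ν) :
    ConvexOrder μ ν ↔
      ∀ ρ : Measure (EuclideanSpace ℝ (Fin d)), IsProbabilityMeasure ρ →
        (∃ R : ℝ, ρ (closedBall (0 : EuclideanSpace ℝ (Fin d)) R)ᶜ = 0) →
        W2sq ν ρ - W2sq μ ρ ≤ ∫ y, ‖y‖ ^ 2 ∂ν - ∫ x, ‖x‖ ^ 2 ∂μ := by
  have hμ2 : MemLp id 2 μ := (memLp_two_iff_integrable_sq_norm aestronglyMeasurable_id).2 hμ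
  have hν2 : MemLp id 2 ν := (memLp_two_iff_integrable_sq_norm aestronglyMeasurable_id).2 hν
  constructor
  · rintro h ρ hρ ⟨R, hR⟩
    have hρ2 := memLp_of_measure_compl_closedBall_eq_zero hR 2
    exact (W2sq_sub_W2sq_le_iff hμ2 hν2 hρ2).2 (h.maxCov_le_maxCov hμ2 hν2 hρ2)
  · refine fun h => convexOrder_of_maxCov_le hμ2 hν2 fun ρ hρ ⟨R, hR⟩ => ?_
    have hρ2 := memLp_of_measure_compl_closedBall_eq_zero hR 2
    exact (W2sq_sub_W2sq_le_iff hμ2 hν2 hρ2).1 (h ρ hρ ⟨R, hR⟩)
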